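/- Soundness of AnyCQ with a perfect predictor: let A be a type of assignments, Φ : A → Formula a family of quantifier-free formulas (the substituted matrices of a conjunctive Boolean query), v : ι → Bool a truth assignment and π̃ its perfect predictor. If T is a nonempty finite set of assignments (the assignments visited during the search) and the maximum over α ∈ T of S_π̃(Φ(α)) is strictly greater than 1/2, then there exists an assignment β ∈ T with B_v(Φ(β)) true; in particular the existentially quantified query is satisfied. -/

import Mathlib

/-- Quantifier-free formulas over atoms indexed by `ι`. -/
inductive Formula (ι : Type*) where
  | atom : ι → Formula ι
  | not : Formula ι → Formula ι
  | and : Formula ι → Formula ι → Formula ι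
  | or : Formula ι → Formula ι → Formula ι

/-- Gödel fuzzy score of a formula under an atom scoring function `π`. -/
noncomputable def Formula.score {ι : Type*} (π : ι → ℝ) : Formula ι → ℝ
  | .atom i => π i
  | .not φ => 1 - φ.score π
  | .and φ ψ => min (φ.score π) (ψ.score π)
  | .or φ ψ => max (φ.score π) (ψ.score π)

/-- Classical Boolean evaluation of a formula under a truth assignment `v`. -/
def Formula.eval {ι : Type*} (v : ι → Bool) : Formula ι → Bool
  | .atom i => v i
  | .not φ => !(φ.eval v)
  | .and φ ψ => φ.eval v && ψ.eval v
  | .or φ ψ => φ.eval v || ψ.eval v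

/-- The perfect predictor associated with a truth assignment `v`. -/
noncomputable def perfectPredictor {ι : Type*} (v : ι → Bool) : ι → ℝ :=
  fun i => if v i then 1 else 0

theorem Formula.score_perfect {ι : Type*} (v : ι → Bool) (φ : Formula ι) :
    φ.score (perfectPredictor v) = if φ.eval v then 1 else 0 := by
  induction φ with
  | atom i => rfl
  | not φ ih =>
    simp only [Formula.score, Formula.eval, ih]
    by_cases h1 : φ.eval v = true <;> simp [h1]
  | and φ ψ ih1 ih2 =>
    simp only [Formula.score, Formula.eval, ih1, ih2]
    by_cases h1 : φ.eval v = true <;> by_cases h2 : ψ.eval v = true <;> simp [h1, h2]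
  | or φ ψ ih1 ih2 =>
    simp only [Formula.score, Formula.eval, ih1, ih2]
    by_cases h1 : φ.eval v = true <;> by_cases h2 : ψ.eval v = true <;> simp [h1, h2]

theorem anycq_soundness {ι A : Type*} (Φ : A → Formula ι) (v : ι → Bool)
    (T : Finset A) (hT : T.Nonempty)
    (h : 1 / 2 < T.sup' hT (fun α => (Φ α).score (perfectPredictor v))) :
    ∃ β ∈ T, (Φ β).eval v = true := by
  obtain ⟨β, hβ, hlt⟩ := (Finset.lt_sup'_iff hT).1 h
  refine ⟨β, hβ, ?_⟩
  rw [Formula.score_perfect] at hlt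
  by_contra hne
  rw [if_neg hne] at hlt
  norm_num at hlt
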